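/- Let λ=(λ_1,...,λ_l) be a partition of length l, let ξ_μ ∈ ℂ be arbitrary scalars for each partition μ with λ < μ, and let τ(t) = s_λ(t) + Σ_{λ<μ} ξ_μ s_μ(t) (a well-defined formal series, since each monomial receives contributions from only finitely many μ). Let 0 ≤ k ≤ l−1 and α be a multi-index with wt α < N_{λ,k}. Then ∂^α τ(t) evaluated at t = [x_1]+⋯+[x_k] is zero as a formal power series in x_1,...,x_k. -/

import Mathlib

open MvPolynomial

noncomputable def pS (n : ℕ) : MvPolynomial ℕ ℂ :=
  ∑ m ∈ Finset.range (n + 1), (Nat.factorial m : ℂ)⁻¹ •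
    ∑ c ∈ Finset.univ.filter
        (fun c : Fin m → Fin (n + 1) =>
          (∑ j, ((c j : ℕ))) = n ∧ ∀ j, 1 ≤ (c j : ℕ)),
      ∏ j, X ((c j : ℕ))

noncomputable def pz (n : ℤ) : MvPolynomial ℕ ℂ :=
  if 0 ≤ n then pS n.toNat else 0

noncomputable def schur {l : ℕ} (lam : Fin l → ℕ) : MvPolynomial ℕ ℂ :=
  Matrix.det (Matrix.of fun a b : Fin l =>
    pz ((lam a : ℤ) - ((a : ℕ) : ℤ) + ((b : ℕ) : ℤ)))

def pad {l : ℕ} (lam : Fin l → ℕ) (a : ℕ) : ℕ := if h : a < l then lam ⟨a, h⟩ else 0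

/-- A partition: an antitone, eventually-zero sequence of naturals
(`toFun a` is `λ_{a+1}`, i.e. 0-indexed). -/
structure Ptn where
  toFun : ℕ → ℕ
  anti : ∀ i j : ℕ, i ≤ j → toFun j ≤ toFun i
  bdd : ∃ N, toFun N = 0

/-- The length (number of nonzero parts) of a partition. -/
noncomputable def Ptn.len (μ : Ptn) : ℕ := Nat.find μ.bdd

/-- The Schur function of a partition. -/
noncomputable def Ptn.schurP (μ : Ptn) : MvPolynomial ℕ ℂ :=
  schur (fun a : Fin μ.len => μ.toFun a)

/-- `λ < μ` in the componentwise order, `λ` given as a finite tuple padded by zeros. -/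
def PtnGt {l : ℕ} (lam : Fin l → ℕ) (μ : Ptn) : Prop :=
  (∀ i, pad lam i ≤ μ.toFun i) ∧ (∃ i, pad lam i ≠ μ.toFun i)

/-- The coefficients (as a formal power series in `t`) of
`τ(t) = s_λ(t) + Σ_{λ<μ} ξ_μ s_μ(t)`. -/
noncomputable def tauCoeff {l : ℕ} (lam : Fin l → ℕ) (ξ : Ptn → ℂ) (β : ℕ →₀ ℕ) : ℂ :=
  MvPolynomial.coeff β (schur lam)
    + ∑ᶠ (μ : Ptn) (_ : PtnGt lam μ), ξ μ * MvPolynomial.coeff β μ.schurP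

/-- The coefficients of
`τ^{(k)}(t) = s_{(λ_1,...,λ_k)}(t) + Σ_μ ξ_μ s_{(μ_1,...,μ_k)}(t)`,
the sum over partitions `μ` with `λ < μ` and `μ_i = λ_i` for `i ≥ k+1`. -/
noncomputable def tauKCoeff {l : ℕ} (lam : Fin l → ℕ) (ξ : Ptn → ℂ) (k : ℕ)
    (β : ℕ →₀ ℕ) : ℂ :=
  MvPolynomial.coeff β (schur (fun a : Fin k => pad lam a))
    + ∑ᶠ (μ : Ptn) (_ : PtnGt lam μ ∧ ∀ i, k ≤ i → μ.toFun i = pad lam i),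
        ξ μ * MvPolynomial.coeff β (schur (fun a : Fin k => μ.toFun a))

/-- Formal partial derivative `∂_i` on coefficient functions of power series in `t`. -/
noncomputable def pdCoeff (i : ℕ) (F : (ℕ →₀ ℕ) → ℂ) (β : ℕ →₀ ℕ) : ℂ :=
  ((β i : ℕ) + 1 : ℂ) * F (β + Finsupp.single i 1)

/-- Iterated formal derivative `∂_{i_1} ⋯ ∂_{i_r}` for `L = [i_1,...,i_r]`. -/
noncomputable def derivsCoeff (L : List ℕ) (F : (ℕ →₀ ℕ) → ℂ) : (ℕ →₀ ℕ) → ℂ :=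
  L.foldr pdCoeff F

/-- The power sum `(x_1^n + ⋯ + x_k^n)/n`. -/
noncomputable def psumC (k : ℕ) (n : ℕ) : MvPolynomial (Fin k) ℂ :=
  (n : ℂ)⁻¹ • ∑ i : Fin k, X i ^ n

/-- The coefficient of the monomial `γ` (in `x_1,...,x_k`) of a formal series in `t`
(given by its coefficient function `F`) after the substitution `t_n ↦ (x_1^n+⋯+x_k^n)/n`. -/
noncomputable def evalPS (k : ℕ) (F : (ℕ →₀ ℕ) → ℂ) (γ : Fin k →₀ ℕ) : ℂ :=
  ∑ᶠ β : (ℕ →₀ ℕ), F β * MvPolynomial.coeff γ (∏ n ∈ β.support, psumC k n ^ β n)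

/-- The generating series `Σ_{n ≥ 1} t_n z^n` of the time variables. -/
noncomputable def timeSeries : PowerSeries (MvPolynomial ℕ ℂ) :=
  PowerSeries.mk fun n => if n = 0 then 0 else X n

lemma coeff_timeSeries_pow (n m : ℕ) :
    PowerSeries.coeff n (timeSeries ^ m) =
      ∑ c ∈ Finset.univ.filter (fun c : Fin m → Fin (n + 1) =>
          (∑ j, ((c j : ℕ))) = n ∧ ∀ j, 1 ≤ (c j : ℕ)),
        ∏ j, (X ((c j : ℕ)) : MvPolynomial ℕ ℂ) := by
  have h1 : PowerSeries.coeff n (timeSeries ^ m) =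
      ((PowerSeries.trunc (n + 1) timeSeries) ^ m).coeff n := by
    have h := congrArg (fun p => Polynomial.coeff p n)
      (PowerSeries.trunc_trunc_pow timeSeries (n + 1) m)
    simp only [PowerSeries.coeff_trunc, Nat.lt_succ_self, if_true] at h
    rw [← h, ← Polynomial.coe_pow, Polynomial.coeff_coe]
  have h2 : PowerSeries.trunc (n + 1) timeSeries =
      ∑ j : Fin (n + 1), Polynomial.monomial (j : ℕ)
        (if (j : ℕ) = 0 then (0 : MvPolynomial ℕ ℂ) else X (j : ℕ)) := by
    rw [PowerSeries.trunc_apply, ← Finset.range_eq_Ico, Finset.sum_range]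
    simp [timeSeries]
  rw [h1, h2, Finset.sum_pow', Polynomial.finsetSum_coeff, Fintype.piFinset_univ,
    Finset.sum_filter]
  refine Finset.sum_congr rfl fun c _ => ?_
  simp only [← Polynomial.C_mul_X_pow_eq_monomial, Finset.prod_mul_distrib,
    Finset.prod_pow_eq_pow_sum, ← map_prod, Polynomial.coeff_C_mul_X_pow, eq_comm (a := n)]
  by_cases hs : (∑ j, ((c j : ℕ))) = n
  · by_cases hp : ∀ j, 1 ≤ (c j : ℕ)
    · rw [if_pos hs, if_pos ⟨hs, hp⟩]
      exact Finset.prod_congr rfl fun j _ => if_neg (by have := hp j; omega)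
    · rw [if_pos hs, if_neg fun h => hp h.2]
      push Not at hp
      obtain ⟨j, hj⟩ := hp
      exact Finset.prod_eq_zero (Finset.mem_univ j) (if_pos (by omega))
  · rw [if_neg hs, if_neg fun h => hs h.1]

/-- Partial sums of the exponential series of `timeSeries`. -/
noncomputable def expPartial (N : ℕ) : PowerSeries (MvPolynomial ℕ ℂ) :=
  ∑ m ∈ Finset.range N, (Nat.factorial m : ℂ)⁻¹ • timeSeries ^ m

lemma coeff_expPartial {n N : ℕ} (h : n < N) :
    PowerSeries.coeff n (expPartial N) = pS n := by
  have hc : ∀ (M : ℕ), PowerSeries.coeff n (expPartial M) =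
      ∑ m ∈ Finset.range M, (Nat.factorial m : ℂ)⁻¹ • PowerSeries.coeff n (timeSeries ^ m) := by
    intro M
    simp only [expPartial, map_sum]
    rfl
  have h0 : PowerSeries.coeff n (expPartial (n + 1)) = pS n := by
    rw [hc, pS]
    simp only [coeff_timeSeries_pow]
  rw [← h0, hc, hc]
  symm
  refine Finset.sum_subset (Finset.range_subset_range.2 h) fun m _ hm => ?_
  have hd : (PowerSeries.X : PowerSeries (MvPolynomial ℕ ℂ)) ^ m ∣ timeSeries ^ m := by
    refine pow_dvd_pow_of_dvd ?_ m
    rw [PowerSeries.X_dvd_iff, ← PowerSeries.coeff_zero_eq_constantCoeff_apply]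
    simp [timeSeries]
  rw [PowerSeries.X_pow_dvd_iff.1 hd n (by simpa using hm), smul_zero]

lemma derivative_expPartial (N : ℕ) :
    PowerSeries.derivative (MvPolynomial ℕ ℂ) (expPartial (N + 1)) =
      PowerSeries.derivative (MvPolynomial ℕ ℂ) timeSeries * expPartial N := by
  simp only [expPartial]
  rw [Finset.sum_range_succ', map_add, map_sum, Finset.mul_sum]
  have h (c : ℂ) (f : PowerSeries (MvPolynomial ℕ ℂ)) :
      PowerSeries.derivative (MvPolynomial ℕ ℂ) (c • f) =
        c • PowerSeries.derivative (MvPolynomial ℕ ℂ) f := by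
    rw [← algebraMap_smul (MvPolynomial ℕ ℂ) c f, Derivation.map_smul, algebraMap_smul]
  simp only [h, pow_zero, PowerSeries.derivative_one, smul_zero, add_zero]
  refine Finset.sum_congr rfl fun m _ => ?_
  rw [PowerSeries.derivative_pow, Nat.factorial_succ, mul_smul_comm, Nat.add_sub_cancel]
  have hm : ((m + 1 : ℕ) : PowerSeries (MvPolynomial ℕ ℂ)) =
      algebraMap ℂ _ ((m + 1 : ℕ) : ℂ) := by simp
  rw [hm, mul_assoc, ← Algebra.smul_def, smul_smul]
  congr 1
  · have : ((m + 1 : ℕ) : ℂ) ≠ 0 := by exact_mod_cast Nat.succ_ne_zero m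
    push_cast at this ⊢
    field_simp
  · ring

lemma pS_succ (n : ℕ) :
    ((n : MvPolynomial ℕ ℂ) + 1) * pS (n + 1) =
      ∑ j ∈ Finset.range (n + 1), ((j : MvPolynomial ℕ ℂ) + 1) * X (j + 1) * pS (n - j) := by
  have h := congrArg (PowerSeries.coeff n) (derivative_expPartial (n + 1))
  rw [PowerSeries.coeff_derivative, coeff_expPartial (by omega), PowerSeries.coeff_mul,
    Finset.Nat.sum_antidiagonal_eq_sum_range_succ_mk] at h
  rw [mul_comm, h]
  refine Finset.sum_congr rfl fun j hj => ?_
  simp only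
  rw [coeff_expPartial (by omega), PowerSeries.coeff_derivative]
  simp [timeSeries, mul_comm]

lemma pS_zero : pS 0 = 1 := by
  rw [← coeff_expPartial (Nat.lt_succ_self 0)]
  simp [expPartial]

lemma pz_of_neg {n : ℤ} (h : n < 0) : pz n = 0 := if_neg (by omega)

lemma pz_natCast (n : ℕ) : pz n = pS n := by simp [pz]

lemma pz_zero : pz 0 = 1 := by simpa [pS_zero] using pz_natCast 0

/-- The Euler recursion `n p_n = Σ_{j ≥ 1} j t_j p_{n-j}`. -/
lemma intCast_mul_pz {n : ℤ} {N : ℕ} (h : n ≤ N) :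
    (n : MvPolynomial ℕ ℂ) * pz n =
      ∑ j ∈ Finset.range N, ((j : MvPolynomial ℕ ℂ) + 1) * X (j + 1) * pz (n - (j + 1)) := by
  rcases lt_or_ge 0 n with hn | hn
  · obtain ⟨m, rfl⟩ : ∃ m : ℕ, n = m + 1 := ⟨(n - 1).toNat, by omega⟩
    rw [← Finset.sum_subset (Finset.range_subset_range.2 (show m + 1 ≤ N by omega))]
    · have := pS_succ m
      rw [← pz_natCast] at this
      push_cast at this ⊢
      rw [this]
      refine Finset.sum_congr rfl fun j hj => ?_
      rw [← pz_natCast]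
      congr 2
      have := Finset.mem_range.1 hj
      omega
    · intro j _ hj
      rw [pz_of_neg, mul_zero]
      have := Finset.mem_range.not.1 hj
      omega
  · rw [Finset.sum_eq_zero]
    · rcases hn.lt_or_eq with hn | rfl
      · rw [pz_of_neg hn, mul_zero]
      · simp
    · intro j _
      rw [pz_of_neg (by omega), mul_zero]

lemma pderiv_pz {i : ℕ} (hi : 1 ≤ i) (n : ℤ) : pderiv i (pz n) = pz (n - i) := by
  obtain ⟨N, hN⟩ : ∃ N : ℕ, n ≤ N := ⟨n.toNat, by omega⟩
  induction N using Nat.strong_induction_on generalizing n with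
  | _ N ih =>
    rcases lt_trichotomy n 0 with hn | rfl | hn
    · rw [pz_of_neg hn, pz_of_neg (by omega), map_zero]
    · rw [pz_zero, pderiv_one, pz_of_neg (by omega)]
    · obtain ⟨M, rfl⟩ : ∃ M : ℕ, n = M := ⟨n.toNat, by omega⟩
      have h1 := congrArg (pderiv i) (intCast_mul_pz (le_refl (M : ℤ)))
      have h2 := intCast_mul_pz (n := (M : ℤ) - i) (N := M) (by omega)
      have hd (j : ℕ) (hj : j ∈ Finset.range M) :
          pderiv i (((j : MvPolynomial ℕ ℂ) + 1) * X (j + 1) * pz ((M : ℤ) - (j + 1))) =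
            (if j + 1 = i then (i : MvPolynomial ℕ ℂ) * pz ((M : ℤ) - i) else 0) +
            ((j : MvPolynomial ℕ ℂ) + 1) * X (j + 1) * pz ((M : ℤ) - i - (j + 1)) := by
        have hj' := Finset.mem_range.1 hj
        have hc : ((j : MvPolynomial ℕ ℂ) + 1) = C ((j : ℂ) + 1) := by simp
        rw [pderiv_mul, hc, pderiv_C_mul, ← hc,
          ih (M - (j + 1)) (by omega) _ (by omega), pderiv_X,
          show (M : ℤ) - (j + 1) - i = M - i - (j + 1) by ring]
        congr 1
        split_ifs with hji
        · subst hji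
          simp
        · rw [Pi.single_eq_of_ne (by omega)]
          simp
      have hk : pderiv i (((M : ℤ) : MvPolynomial ℕ ℂ) * pz M) =
          (M : MvPolynomial ℕ ℂ) * pderiv i (pz M) := by
        have hc : (((M : ℤ) : MvPolynomial ℕ ℂ)) = C (M : ℂ) := by simp
        rw [hc, pderiv_C_mul]
        simp
      rw [hk, map_sum, Finset.sum_congr rfl hd, Finset.sum_add_distrib, ← h2] at h1
      have h3 : ∑ j ∈ Finset.range M,
          (if j + 1 = i then (i : MvPolynomial ℕ ℂ) * pz ((M : ℤ) - i) else 0) =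
            (i : MvPolynomial ℕ ℂ) * pz ((M : ℤ) - i) := by
        rcases le_or_gt i M with hiM | hiM
        · rw [Finset.sum_eq_single_of_mem (i - 1) (Finset.mem_range.2 (by omega)),
            if_pos (by omega)]
          intro j _ hj
          exact if_neg (by omega)
        · rw [pz_of_neg (by omega)]
          simp
      rw [h3] at h1
      have hM : (M : MvPolynomial ℕ ℂ) ≠ 0 := by
        exact_mod_cast (show M ≠ 0 by omega)
      apply mul_left_cancel₀ hM
      rw [h1]
      push_cast
      ring

/-- The specialization `t = [x_1] + ⋯ + [x_k]`. -/
noncomputable def evalHom (k : ℕ) : MvPolynomial ℕ ℂ →ₐ[ℂ] MvPolynomial (Fin k) ℂ :=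
  aeval (psumC k)

/-- The polynomial `∏ (1 - x_i z)` in `z`. -/
noncomputable def elemPoly (k : ℕ) : Polynomial (MvPolynomial (Fin k) ℂ) :=
  ∏ i : Fin k, (1 - Polynomial.C (X i) * Polynomial.X)

lemma elemPoly_coeff_zero (k : ℕ) : (elemPoly k).coeff 0 = 1 := by
  simp [elemPoly, Polynomial.coeff_zero_eq_eval_zero, Polynomial.eval_prod]

lemma elemPoly_coeff_of_lt {k j : ℕ} (h : k < j) : (elemPoly k).coeff j = 0 := by
  refine Polynomial.coeff_eq_zero_of_natDegree_lt (lt_of_le_of_lt ?_ h)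
  refine (Polynomial.natDegree_prod_le _ _).trans ?_
  refine (Finset.sum_le_card_nsmul _ _ 1 fun i _ => ?_).trans (by simp)
  compute_degree

/-- The logarithmic derivative of `∏ (1 - x_i z)⁻¹`. -/
noncomputable def powerSumSeries (k : ℕ) : PowerSeries (MvPolynomial (Fin k) ℂ) :=
  PowerSeries.mk fun n => ∑ i : Fin k, X i ^ (n + 1)

lemma derivative_prod_one_sub {k : ℕ} (s : Finset (Fin k)) :
    PowerSeries.derivative (MvPolynomial (Fin k) ℂ)
        (∏ i ∈ s, (1 - PowerSeries.C (X i) * PowerSeries.X)) =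
      -(PowerSeries.mk fun n => ∑ i ∈ s, X i ^ (n + 1)) *
        ∏ i ∈ s, (1 - PowerSeries.C (X i) * PowerSeries.X) := by
  classical
  induction s using Finset.induction_on with
  | empty =>
    have : (PowerSeries.mk fun n => (0 : MvPolynomial (Fin k) ℂ)) = 0 := by ext; simp
    simp [this]
  | insert a s ha ih =>
    have hg : (PowerSeries.mk fun n => (X a : MvPolynomial (Fin k) ℂ) ^ (n + 1)) *
        (1 - PowerSeries.C (X a) * PowerSeries.X) = PowerSeries.C (X a) := by
      ext n
      rw [mul_sub, mul_one, map_sub, mul_left_comm, PowerSeries.coeff_C_mul]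
      cases n with
      | zero => simp
      | succ n =>
        rw [PowerSeries.coeff_succ_mul_X, PowerSeries.coeff_C]
        simp [pow_succ']
    have hs : (PowerSeries.mk fun n => ∑ i ∈ insert a s,
        (X i : MvPolynomial (Fin k) ℂ) ^ (n + 1)) =
        PowerSeries.mk (fun n => (X a : MvPolynomial (Fin k) ℂ) ^ (n + 1)) +
        PowerSeries.mk fun n => ∑ i ∈ s, X i ^ (n + 1) := by
      ext n
      simp [Finset.sum_insert ha]
    have hd : PowerSeries.derivative (MvPolynomial (Fin k) ℂ)
        (1 - PowerSeries.C (X a) * PowerSeries.X) = -PowerSeries.C (X a) := by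
      rw [map_sub, Derivation.leibniz]
      simp
    rw [Finset.prod_insert ha, Derivation.leibniz, ih, hs, hd]
    simp only [smul_eq_mul]
    linear_combination (∏ i ∈ s, (1 - PowerSeries.C (X i) * PowerSeries.X)) * hg

/-- The series `Σ h_n z^n` of specialized `p_n`. -/
noncomputable def completeSeries (k : ℕ) : PowerSeries (MvPolynomial (Fin k) ℂ) :=
  PowerSeries.mk fun n => evalHom k (pS n)

lemma evalHom_X_succ (k j : ℕ) :
    ((j : MvPolynomial (Fin k) ℂ) + 1) * evalHom k (X (j + 1)) =
      ∑ i : Fin k, X i ^ (j + 1) := by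
  have hj : ((j : ℂ) + 1) ≠ 0 := by exact_mod_cast Nat.succ_ne_zero j
  have hc : ((j : MvPolynomial (Fin k) ℂ) + 1) = C ((j : ℂ) + 1) := by
    rw [map_add, map_natCast, map_one]
  have hX : evalHom k (X (j + 1)) = psumC k (j + 1) := aeval_X _ _
  rw [hX, psumC, hc, ← smul_eq_C_mul, smul_smul, Nat.cast_add, Nat.cast_one,
    mul_inv_cancel₀ hj, one_smul]

lemma evalHom_pS_succ (k n : ℕ) :
    ((n : MvPolynomial (Fin k) ℂ) + 1) * evalHom k (pS (n + 1)) =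
      ∑ j ∈ Finset.range (n + 1),
        (∑ i : Fin k, X i ^ (j + 1)) * evalHom k (pS (n - j)) := by
  have h := congrArg (evalHom k) (pS_succ n)
  simp only [map_mul, map_sum, map_add, map_natCast, map_one, evalHom_X_succ] at h
  exact h

lemma derivative_completeSeries (k : ℕ) :
    PowerSeries.derivative (MvPolynomial (Fin k) ℂ) (completeSeries k) =
      powerSumSeries k * completeSeries k := by
  ext1 n
  rw [PowerSeries.coeff_derivative, PowerSeries.coeff_mul,
    Finset.Nat.sum_antidiagonal_eq_sum_range_succ_mk, mul_comm]
  simp only [completeSeries, powerSumSeries, PowerSeries.coeff_mk]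
  exact evalHom_pS_succ k n

lemma elemPoly_mul_completeSeries (k : ℕ) :
    (elemPoly k : PowerSeries (MvPolynomial (Fin k) ℂ)) * completeSeries k = 1 := by
  have hE : (elemPoly k : PowerSeries (MvPolynomial (Fin k) ℂ)) =
      ∏ i : Fin k, (1 - PowerSeries.C (X i) * PowerSeries.X) := by
    rw [elemPoly, ← Polynomial.coeToPowerSeries.ringHom_apply, map_prod]
    simp
  apply PowerSeries.derivative.ext
  · rw [Derivation.leibniz, derivative_completeSeries, hE, derivative_prod_one_sub,
      PowerSeries.derivative_one, powerSumSeries]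
    simp only [smul_eq_mul]
    ring
  · rw [map_mul, map_one, ← PowerSeries.coeff_zero_eq_constantCoeff_apply,
      ← PowerSeries.coeff_zero_eq_constantCoeff_apply, Polynomial.coeff_coe,
      elemPoly_coeff_zero, completeSeries, PowerSeries.coeff_mk, pS_zero, map_one, one_mul]

lemma sum_elemPoly_coeff_mul {k K : ℕ} (hK : k ≤ K) {n : ℤ} (hn : n ≠ 0) :
    ∑ j ∈ Finset.range (K + 1), (elemPoly k).coeff j * evalHom k (pz (n - j)) = 0 := by
  rcases lt_or_gt_of_ne hn with hn | hn
  · refine Finset.sum_eq_zero fun j _ => ?_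
    rw [pz_of_neg (by omega), map_zero, mul_zero]
  · obtain ⟨m, rfl⟩ : ∃ m : ℕ, n = m := ⟨n.toNat, by omega⟩
    have h := congrArg (PowerSeries.coeff m) (elemPoly_mul_completeSeries k)
    rw [PowerSeries.coeff_mul, Finset.Nat.sum_antidiagonal_eq_sum_range_succ_mk,
      PowerSeries.coeff_one, if_neg (by omega)] at h
    rw [← h]
    have hl : ∑ j ∈ Finset.range (K + 1), (elemPoly k).coeff j * evalHom k (pz ((m : ℤ) - j)) =
        ∑ j ∈ Finset.range (K + m + 1),
          (elemPoly k).coeff j * evalHom k (pz ((m : ℤ) - j)) := by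
      refine Finset.sum_subset (Finset.range_subset_range.2 (by omega)) fun j _ hj => ?_
      rw [elemPoly_coeff_of_lt (by have := Finset.mem_range.not.1 hj; omega), zero_mul]
    have hr : ∑ j ∈ Finset.range (m + 1), (elemPoly k).coeff j * evalHom k (pz ((m : ℤ) - j)) =
        ∑ j ∈ Finset.range (K + m + 1),
          (elemPoly k).coeff j * evalHom k (pz ((m : ℤ) - j)) := by
      refine Finset.sum_subset (Finset.range_subset_range.2 (by omega)) fun j _ hj => ?_
      rw [pz_of_neg (by have := Finset.mem_range.not.1 hj; omega), map_zero, mul_zero]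
    rw [hl, ← hr]
    refine Finset.sum_congr rfl fun j hj => ?_
    have := Finset.mem_range.1 hj
    rw [Polynomial.coeff_coe, completeSeries, PowerSeries.coeff_mk, ← pz_natCast,
      Nat.cast_sub (by omega)]

/-- The determinant `det (p_{m_a + b})`. -/
noncomputable def shiftDet {n : ℕ} (m : Fin n → ℤ) : MvPolynomial ℕ ℂ :=
  Matrix.det (Matrix.of fun a b : Fin n => pz (m a + ((b : ℕ) : ℤ)))

lemma evalHom_shiftDet_eq_zero {n k : ℕ} (m : Fin n → ℤ) (b : Fin n) (hb : k ≤ b)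
    (hm : ∀ a, m a ≠ -((b : ℕ) : ℤ)) : evalHom k (shiftDet m) = 0 := by
  rw [shiftDet, AlgHom.map_det]
  refine Matrix.exists_mulVec_eq_zero_iff.1
    ⟨fun c => if c ≤ b then (elemPoly k).coeff (b - c : ℕ) else 0, fun h => ?_, ?_⟩
  · have := congrFun h b
    simp [elemPoly_coeff_zero] at this
  · funext a
    have h := sum_elemPoly_coeff_mul (k := k) (K := b) hb (n := m a + (b : ℕ))
      (by have := hm a; omega)
    have hr : ∑ j ∈ Finset.range ((b : ℕ) + 1),
        (elemPoly k).coeff j * evalHom k (pz (m a + (b : ℕ) - j)) =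
        ∑ c ∈ Finset.range n, evalHom k (pz (m a + (c : ℕ))) *
          if c ≤ (b : ℕ) then (elemPoly k).coeff (b - c : ℕ) else 0 := by
      rw [← Finset.sum_range_reflect, ← Finset.sum_subset
        (Finset.range_subset_range.2 (show (b : ℕ) + 1 ≤ n by omega))]
      · refine Finset.sum_congr rfl fun c hc => ?_
        have := Finset.mem_range.1 hc
        rw [if_pos (by omega), mul_comm]
        congr 3
        omega
      · intro c _ hc
        rw [if_neg (by have := Finset.mem_range.not.1 hc; omega), mul_zero]
    refine Eq.trans ?_ (hr.symm.trans h)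
    rw [Finset.sum_range, Matrix.mulVec, dotProduct]
    refine Finset.sum_congr rfl fun c _ => ?_
    simp only [Fin.le_def, AlgHom.mapMatrix_apply, Matrix.map_apply, Matrix.of_apply]

lemma shiftDet_apply {n : ℕ} (m : Fin n → ℤ) :
    shiftDet m = ∑ σ : Equiv.Perm (Fin n),
      (Equiv.Perm.sign σ : ℤ) • ∏ a, pz (m a + ((σ a : ℕ) : ℤ)) := by
  rw [shiftDet, ← Matrix.det_transpose, Matrix.det_apply]
  rfl

lemma pderiv_shiftDet {n i : ℕ} (hi : 1 ≤ i) (m : Fin n → ℤ) :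
    pderiv i (shiftDet m) = ∑ a, shiftDet (Function.update m a (m a - i)) := by
  have hprod (s : Finset (Fin n)) (f : Fin n → MvPolynomial ℕ ℂ) :
      pderiv i (∏ j ∈ s, f j) =
        ∑ a ∈ s, ∏ j ∈ s, Function.update f a (pderiv i (f a)) j := by
    classical
    induction s using Finset.induction_on with
    | empty => simp
    | insert a s ha ih =>
      rw [Finset.prod_insert ha, Derivation.leibniz, ih, Finset.sum_insert ha,
        Finset.prod_insert ha, Function.update_self, Finset.prod_congr rfl
          (fun j hj => Function.update_of_ne (ne_of_mem_of_not_mem hj ha) _ f), add_comm,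
          smul_eq_mul, smul_eq_mul, mul_comm, Finset.mul_sum]
      congr 1
      refine Finset.sum_congr rfl fun c hc => ?_
      rw [Finset.prod_insert ha, Function.update_of_ne (ne_of_mem_of_not_mem hc ha).symm]
  simp only [shiftDet_apply, map_sum]
  rw [Finset.sum_comm]
  refine Finset.sum_congr rfl fun σ _ => ?_
  rw [← Finset.smul_sum, map_zsmul, hprod]
  congr 1
  refine Finset.sum_congr rfl fun a _ => Finset.prod_congr rfl fun j _ => ?_
  rcases eq_or_ne j a with rfl | h
  · rw [Function.update_self, Function.update_self, pderiv_pz hi]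
    congr 1
    ring
  · rw [Function.update_of_ne h, Function.update_of_ne h]

lemma sum_le_sum_of_antitone {n k : ℕ} {f : Fin n → ℤ} (hf : Antitone f) {S : Finset (Fin n)}
    (hS : S.card = (Finset.univ.filter fun a : Fin n => k ≤ (a : ℕ)).card) :
    ∑ a ∈ Finset.univ.filter (fun a : Fin n => k ≤ (a : ℕ)), f a ≤ ∑ a ∈ S, f a := by
  set T := Finset.univ.filter fun a : Fin n => k ≤ (a : ℕ) with hT
  rcases le_or_gt n k with hn | hn
  · have hTe : T = ∅ := Finset.filter_eq_empty_iff.2 fun a _ => by omega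
    rw [hTe, Finset.card_empty, Finset.card_eq_zero] at hS
    rw [hTe, hS]
  · have hle : ∑ a ∈ T, (f a - f ⟨k, hn⟩) ≤ ∑ a ∈ S, (f a - f ⟨k, hn⟩) := by
      calc ∑ a ∈ T, (f a - f ⟨k, hn⟩) ≤ ∑ a ∈ T ∩ S, (f a - f ⟨k, hn⟩) := by
            rw [← Finset.sum_inter_add_sum_sdiff T S]
            refine add_le_of_nonpos_right (Finset.sum_nonpos fun a ha => ?_)
            have ha' : k ≤ (a : ℕ) := (Finset.mem_filter.1 (Finset.mem_sdiff.1 ha).1).2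
            exact sub_nonpos.2 (hf (Fin.le_def.2 ha'))
        _ ≤ ∑ a ∈ S, (f a - f ⟨k, hn⟩) := by
            refine Finset.sum_le_sum_of_subset_of_nonneg Finset.inter_subset_right
              fun a haS haT => ?_
            have ha' : ¬ k ≤ (a : ℕ) := fun h =>
              haT (Finset.mem_inter.2 ⟨Finset.mem_filter.2 ⟨Finset.mem_univ a, h⟩, haS⟩)
            exact sub_nonneg.2 (hf (Fin.le_def.2 (not_le.1 ha').le))
    rw [Finset.sum_sub_distrib, Finset.sum_sub_distrib, Finset.sum_const, Finset.sum_const,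
      hS] at hle
    linarith

lemma sum_le_of_forall_exists_shift {n k : ℕ} {ν d : Fin n → ℕ} (hν : Antitone ν)
    (h : ∀ b : Fin n, k ≤ (b : ℕ) →
      ∃ a, (ν a : ℤ) - (d a : ℤ) - ((a : ℕ) : ℤ) = -((b : ℕ) : ℤ)) :
    ∑ a ∈ Finset.univ.filter (fun a : Fin n => k ≤ (a : ℕ)), ν a ≤ ∑ a, d a := by
  choose! g hg using h
  set T := Finset.univ.filter fun a : Fin n => k ≤ (a : ℕ) with hT
  have hgT : ∀ b ∈ T, (ν (g b) : ℤ) - (d (g b) : ℤ) - ((g b : ℕ) : ℤ) = -((b : ℕ) : ℤ) :=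
    fun b hb => hg b (Finset.mem_filter.1 hb).2
  have hinj : Set.InjOn g T := by
    intro b hb c hc hbc
    have h1 := hgT b hb
    have h2 := hgT c hc
    rw [hbc] at h1
    exact Fin.ext (by omega)
  have hanti : Antitone fun a : Fin n => (ν a : ℤ) - ((a : ℕ) : ℤ) := by
    intro a b hab
    have h1 := hν hab
    have h2 := Fin.le_def.1 hab
    simp only
    omega
  have h1 := sum_le_sum_of_antitone (k := k) hanti (Finset.card_image_of_injOn hinj)
  rw [Finset.sum_image hinj, ← hT] at h1
  have h2 : ∑ b ∈ T, d (g b) ≤ ∑ a, d a := by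
    rw [← Finset.sum_image hinj]
    exact Finset.sum_le_sum_of_subset (Finset.subset_univ _)
  have h3 : ∑ b ∈ T, ((ν (g b) : ℤ) - ((g b : ℕ) : ℤ)) =
      ∑ b ∈ T, ((d (g b) : ℤ) - ((b : ℕ) : ℤ)) :=
    Finset.sum_congr rfl fun b hb => by have := hgT b hb; omega
  rw [h3, Finset.sum_sub_distrib, Finset.sum_sub_distrib] at h1
  zify at h2 ⊢
  linarith

/-- The differential operator `∂_{i_1} ⋯ ∂_{i_r}` on polynomials, for `L = [i_1,...,i_r]`. -/
noncomputable def iterPDeriv (L : List ℕ) : Module.End ℂ (MvPolynomial ℕ ℂ) :=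
  (L.map fun i => (pderiv i).toLinearMap).prod

lemma iterPDeriv_cons (i : ℕ) (L : List ℕ) (p : MvPolynomial ℕ ℂ) :
    iterPDeriv (i :: L) p = pderiv i (iterPDeriv L p) := by
  simp [iterPDeriv]

lemma iterPDeriv_concat (i : ℕ) (L : List ℕ) (p : MvPolynomial ℕ ℂ) :
    iterPDeriv (L ++ [i]) p = iterPDeriv L (pderiv i p) := by
  simp [iterPDeriv]

lemma evalHom_iterPDeriv_shiftDet {n k : ℕ} {ν : Fin n → ℕ} (hν : Antitone ν) (L : List ℕ)
    (hL : ∀ i ∈ L, 1 ≤ i) (d : Fin n → ℕ)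
    (h : L.sum + ∑ a, d a <
      ∑ a ∈ Finset.univ.filter (fun a : Fin n => k ≤ (a : ℕ)), ν a) :
    evalHom k (iterPDeriv L
      (shiftDet fun a => (ν a : ℤ) - (d a : ℤ) - ((a : ℕ) : ℤ))) = 0 := by
  induction L using List.reverseRecOn generalizing d with
  | nil =>
    by_contra hne
    refine absurd (sum_le_of_forall_exists_shift (k := k) hν (d := d) fun b hb => ?_)
      (by simpa using h)
    by_contra hb'
    push Not at hb'
    exact hne (by simpa [iterPDeriv] using evalHom_shiftDet_eq_zero _ b hb hb')
  | append_singleton L i ih =>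
    have hi : 1 ≤ i := hL i (by simp)
    rw [iterPDeriv_concat, pderiv_shiftDet hi, map_sum, map_sum]
    refine Finset.sum_eq_zero fun a _ => ?_
    have hd := ih (fun j hj => hL j (by simp [hj])) (Function.update d a (d a + i)) (by
      rw [Finset.sum_update_of_mem (Finset.mem_univ a), Finset.sdiff_singleton_eq_erase]
      rw [← Finset.add_sum_erase _ _ (Finset.mem_univ a), List.sum_append,
        List.sum_singleton] at h
      omega)
    rw [← hd]
    congr 3
    funext c
    rcases eq_or_ne c a with rfl | hc
    · rw [Function.update_self, Function.update_self]
      push_cast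
      ring
    · rw [Function.update_of_ne hc, Function.update_of_ne hc]

lemma evalHom_iterPDeriv_schur {n k : ℕ} {ν : Fin n → ℕ} (hν : Antitone ν) (L : List ℕ)
    (hL : ∀ i ∈ L, 1 ≤ i)
    (h : L.sum < ∑ a ∈ Finset.univ.filter (fun a : Fin n => k ≤ (a : ℕ)), ν a) :
    evalHom k (iterPDeriv L (schur ν)) = 0 := by
  have h0 := evalHom_iterPDeriv_shiftDet (k := k) hν L hL (fun _ => 0) (by simpa using h)
  have hs : schur ν = shiftDet fun a => (ν a : ℤ) - ((0 : ℕ) : ℤ) - ((a : ℕ) : ℤ) := by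
    simp [schur, shiftDet]
  rw [hs, h0]

lemma coeff_iterPDeriv (L : List ℕ) (p : MvPolynomial ℕ ℂ) (β : ℕ →₀ ℕ) :
    coeff β (iterPDeriv L p) = derivsCoeff L (fun β => coeff β p) β := by
  induction L generalizing β with
  | nil => simp [iterPDeriv, derivsCoeff]
  | cons i L ih =>
    rw [iterPDeriv_cons, coeff_pderiv, ih, mul_comm]
    simp [derivsCoeff, pdCoeff]

lemma derivsCoeff_congr (L : List ℕ) {F G : (ℕ →₀ ℕ) → ℂ} {β : ℕ →₀ ℕ}
    (h : F (β + (L.map fun i => Finsupp.single i 1).sum) =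
      G (β + (L.map fun i => Finsupp.single i 1).sum)) :
    derivsCoeff L F β = derivsCoeff L G β := by
  induction L generalizing β with
  | nil => simpa [derivsCoeff] using h
  | cons i L ih =>
    have := ih (β := β + Finsupp.single i 1) (by simpa [add_assoc] using h)
    simp only [derivsCoeff, List.foldr_cons, pdCoeff] at this ⊢
    rw [this]

lemma isWeightedHomogeneous_pS (n : ℕ) : IsWeightedHomogeneous (id : ℕ → ℕ) (pS n) n := by
  refine IsWeightedHomogeneous.sum _ _ _ fun m _ => ?_
  rw [smul_eq_C_mul]
  refine IsWeightedHomogeneous.C_mul (IsWeightedHomogeneous.sum _ _ _ fun c hc => ?_) _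
  have := IsWeightedHomogeneous.prod (w := (id : ℕ → ℕ)) Finset.univ
    (fun j => (X (c j : ℕ) : MvPolynomial ℕ ℂ)) (fun j => (c j : ℕ))
    fun j _ => isWeightedHomogeneous_X ℂ id _
  rwa [(Finset.mem_filter.1 hc).2.1] at this

lemma weight_eq_of_coeff_schur_ne_zero {n : ℕ} {ν : Fin n → ℕ} {β : ℕ →₀ ℕ}
    (h : coeff β (schur ν) ≠ 0) : Finsupp.weight (id : ℕ → ℕ) β = ∑ a, ν a := by
  have hs : schur ν = shiftDet fun a => (ν a : ℤ) - ((a : ℕ) : ℤ) := rfl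
  rw [hs, shiftDet_apply, coeff_sum] at h
  obtain ⟨σ, -, hσ⟩ := Finset.exists_ne_zero_of_sum_ne_zero h
  rw [coeff_smul] at hσ
  have hp := right_ne_zero_of_smul hσ
  set e : Fin n → ℤ := fun a => (ν a : ℤ) - ((a : ℕ) : ℤ) + ((σ a : ℕ) : ℤ) with he
  have hnn : ∀ a, 0 ≤ e a := by
    intro a
    by_contra ha
    refine hp ?_
    rw [Finset.prod_eq_zero (Finset.mem_univ a) (pz_of_neg (not_le.1 ha)), coeff_zero]
  have hhom : IsWeightedHomogeneous (id : ℕ → ℕ) (∏ a, pz (e a)) (∑ a, (e a).toNat) := by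
    refine IsWeightedHomogeneous.prod _ _ _ fun a _ => ?_
    rw [pz, if_pos (hnn a)]
    exact isWeightedHomogeneous_pS _
  rw [hhom hp]
  zify
  rw [Finset.sum_congr rfl fun a _ => Int.toNat_of_nonneg (hnn a), he, Finset.sum_add_distrib,
    Finset.sum_sub_distrib, Equiv.sum_comp σ fun a => ((a : ℕ) : ℤ)]
  ring

lemma Ptn.toFun_eq_zero_of_len_le {μ : Ptn} {a : ℕ} (h : μ.len ≤ a) : μ.toFun a = 0 :=
  Nat.le_zero.1 ((μ.anti _ _ h).trans (Nat.find_spec μ.bdd).le)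

lemma Ptn.toFun_pos_of_lt_len {μ : Ptn} {a : ℕ} (h : a < μ.len) : 0 < μ.toFun a :=
  Nat.pos_of_ne_zero (Nat.find_min μ.bdd h)

lemma Ptn.ext_toFun {μ ν : Ptn} (h : μ.toFun = ν.toFun) : μ = ν := by
  cases μ
  cases ν
  congr

lemma finite_setOf_coeff_schurP_ne_zero (β : ℕ →₀ ℕ) :
    {μ : Ptn | coeff β μ.schurP ≠ 0}.Finite := by
  set W := Finsupp.weight (id : ℕ → ℕ) β with hW
  have hsum : ∀ μ : Ptn, coeff β μ.schurP ≠ 0 → W = ∑ a : Fin μ.len, μ.toFun a :=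
    fun μ hμ => weight_eq_of_coeff_schur_ne_zero hμ
  have hlen : ∀ μ : Ptn, coeff β μ.schurP ≠ 0 → μ.len ≤ W := by
    intro μ hμ
    rw [hsum μ hμ]
    simpa using Finset.card_nsmul_le_sum Finset.univ (fun a : Fin μ.len => μ.toFun a) 1
      fun a _ => Ptn.toFun_pos_of_lt_len a.2
  refine Set.Finite.of_injOn (f := fun μ : Ptn => fun a : Fin W => μ.toFun a)
    (t := Set.Iic fun _ => W) ?_ ?_ (Set.finite_Iic _)
  · intro μ hμ a
    rcases lt_or_ge (a : ℕ) μ.len with ha | ha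
    · refine le_of_le_of_eq ?_ (hsum μ hμ).symm
      exact Finset.single_le_sum (f := fun a : Fin μ.len => μ.toFun a)
        (fun _ _ => Nat.zero_le _) (Finset.mem_univ (⟨a, ha⟩ : Fin μ.len))
    · simp only
      rw [Ptn.toFun_eq_zero_of_len_le ha]
      exact Nat.zero_le _
  · intro μ hμ ν hν h
    refine Ptn.ext_toFun (funext fun a => ?_)
    rcases lt_or_ge a W with ha | ha
    · exact congrFun h ⟨a, ha⟩
    · rw [Ptn.toFun_eq_zero_of_len_le ((hlen μ hμ).trans ha),
        Ptn.toFun_eq_zero_of_len_le ((hlen ν hν).trans ha)]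

lemma isHomogeneous_psumC (k n : ℕ) : (psumC k n).IsHomogeneous n := by
  rw [psumC, smul_eq_C_mul]
  refine IsHomogeneous.C_mul (IsHomogeneous.sum _ _ _ fun i _ => ?_) _
  exact isHomogeneous_X_pow i n

lemma finite_setOf_coeff_prod_psumC_ne_zero (k : ℕ) (γ : Fin k →₀ ℕ) :
    {β : ℕ →₀ ℕ | coeff γ (∏ n ∈ β.support, psumC k n ^ β n) ≠ 0}.Finite := by
  refine (Set.finite_Iic (∑ j ∈ Finset.range (γ.degree + 1),
    Finsupp.single j γ.degree)).subset fun β hβ => ?_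
  have hdeg : ∑ n ∈ β.support, n * β n = γ.degree := by
    by_contra hne
    refine hβ (IsHomogeneous.coeff_eq_zero (n := ∑ n ∈ β.support, n * β n) ?_ (Ne.symm hne))
    exact IsHomogeneous.prod _ _ _ fun n _ => (isHomogeneous_psumC k n).pow _
  intro j
  by_cases hj : j ∈ β.support
  · have hj0 : j ≠ 0 := by
      rintro rfl
      refine hβ ?_
      rw [Finset.prod_eq_zero hj, coeff_zero]
      rw [psumC, Nat.cast_zero, inv_zero, zero_smul, zero_pow (Finsupp.mem_support_iff.1 hj)]
    have hle : j * β j ≤ γ.degree := by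
      rw [← hdeg]
      exact Finset.single_le_sum (f := fun n => n * β n) (fun _ _ => Nat.zero_le _) hj
    have hjd : j ≤ γ.degree :=
      (Nat.le_mul_of_pos_right j (Nat.pos_of_ne_zero (Finsupp.mem_support_iff.1 hj))).trans hle
    have hbd : β j ≤ γ.degree := (Nat.le_mul_of_pos_left _ (Nat.pos_of_ne_zero hj0)).trans hle
    rw [Finsupp.finsetSum_apply, Finset.sum_eq_single_of_mem j
      (Finset.mem_range.2 (by omega)) fun i _ hi => Finsupp.single_eq_of_ne hi.symm,
      Finsupp.single_eq_same]
    exact hbd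
  · rw [Finsupp.notMem_support_iff.1 hj]
    exact Nat.zero_le _

lemma evalPS_coeff (k : ℕ) (p : MvPolynomial ℕ ℂ) (γ : Fin k →₀ ℕ) :
    evalPS k (fun β => coeff β p) γ = coeff γ (evalHom k p) := by
  rw [evalPS, finsum_eq_sum_of_support_subset (s := p.support), evalHom, aeval_def, eval₂_eq,
    coeff_sum]
  · refine Finset.sum_congr rfl fun β _ => ?_
    rw [algebraMap_eq, coeff_C_mul]
  · intro β hβ
    exact mem_support_iff.2 (left_ne_zero_of_mul hβ)

lemma sum_pad_le {l : ℕ} {lam : Fin l → ℕ} (hpos : ∀ i, 1 ≤ lam i) (k : ℕ) {μ : Ptn}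
    (h : PtnGt lam μ) :
    ∑ a ∈ Finset.Ico k l, pad lam a ≤
      ∑ a ∈ Finset.univ.filter (fun a : Fin μ.len => k ≤ (a : ℕ)), μ.toFun a := by
  have hlen : l ≤ μ.len := by
    by_contra hlt
    have h1 := h.1 μ.len
    rw [Ptn.toFun_eq_zero_of_len_le le_rfl, pad, dif_pos (not_le.1 hlt)] at h1
    have := hpos ⟨μ.len, not_le.1 hlt⟩
    omega
  calc ∑ a ∈ Finset.Ico k l, pad lam a ≤ ∑ a ∈ Finset.Ico k l, μ.toFun a :=
        Finset.sum_le_sum fun a _ => h.1 a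
    _ ≤ ∑ a ∈ Finset.Ico k μ.len, μ.toFun a :=
        Finset.sum_le_sum_of_subset (Finset.Ico_subset_Ico_right hlen)
    _ = _ := by
        rw [Finset.sum_filter, Fin.sum_univ_eq_sum_range
          (fun a => if k ≤ a then μ.toFun a else 0), ← Finset.sum_filter]
        congr 1
        ext a
        simp [and_comm]

lemma sum_pad_eq {l : ℕ} (lam : Fin l → ℕ) (k : ℕ) :
    ∑ a ∈ Finset.Ico k l, pad lam a =
      ∑ a ∈ Finset.univ.filter (fun a : Fin l => k ≤ (a : ℕ)), lam a := by
  have h : ∀ a : Fin l, lam a = pad lam a := fun a => by simp [pad]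
  simp only [h]
  rw [Finset.sum_filter, Fin.sum_univ_eq_sum_range
    (fun a => if k ≤ a then pad lam a else 0), ← Finset.sum_filter]
  congr 1
  ext a
  simp [and_comm]

/-- Let `λ` be a partition of length `l`, `ξ_μ ∈ ℂ` arbitrary scalars and
`τ(t) = s_λ(t) + Σ_{λ<μ} ξ_μ s_μ(t)` (a formal power series in `t`, given here by its
coefficient function `tauCoeff lam ξ`). Let `0 ≤ k ≤ l-1` and `α` a multi-index
(encoded as the list `L` of indices of the derivatives `∂_i`, with multiplicity, so
`wt α = L.sum`) with `wt α < N_{λ,k} = λ_{k+1}+⋯+λ_l`. Then `∂^α τ(t)` evaluated at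
`t = [x_1]+⋯+[x_k]` is zero as a formal power series in `x_1,...,x_k`, i.e. every
coefficient `γ` of the resulting series vanishes. -/
theorem statement17 (l : ℕ) (lam : Fin l → ℕ)
    (hanti : Antitone lam) (hpos : ∀ i, 1 ≤ lam i)
    (ξ : Ptn → ℂ)
    (k : ℕ) (hk : k + 1 ≤ l)
    (L : List ℕ) (hL : ∀ i ∈ L, 1 ≤ i)
    (hwt : L.sum < ∑ a ∈ Finset.Ico k l, pad lam a)
    (γ : Fin k →₀ ℕ) :
    evalPS k (derivsCoeff L (tauCoeff lam ξ)) γ = 0 := by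
  have hB := finite_setOf_coeff_prod_psumC_ne_zero k γ
  set s : ℕ →₀ ℕ := (L.map fun i => Finsupp.single i 1).sum with hs
  have hM : (⋃ β ∈ {β : ℕ →₀ ℕ | coeff γ (∏ n ∈ β.support, psumC k n ^ β n) ≠ 0},
      {μ : Ptn | coeff (β + s) μ.schurP ≠ 0}).Finite :=
    hB.biUnion fun β _ => finite_setOf_coeff_schurP_ne_zero _
  classical
  set M := hM.toFinset.filter fun μ => PtnGt lam μ with hMdef
  set P : MvPolynomial ℕ ℂ := schur lam + ∑ μ ∈ M, ξ μ • μ.schurP with hP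
  have hzero : evalHom k (iterPDeriv L P) = 0 := by
    rw [hP, map_add, map_add, map_sum, map_sum,
      evalHom_iterPDeriv_schur hanti L hL (by rwa [← sum_pad_eq]), zero_add]
    refine Finset.sum_eq_zero fun μ hμ => ?_
    have hgt : PtnGt lam μ := (Finset.mem_filter.1 hμ).2
    have hz : evalHom k (iterPDeriv L μ.schurP) = 0 :=
      evalHom_iterPDeriv_schur (fun a b hab => μ.anti _ _ hab) L hL
        (hwt.trans_le (sum_pad_le hpos k hgt))
    rw [map_smul, map_smul, hz, smul_zero]
  have htau : evalPS k (derivsCoeff L (tauCoeff lam ξ)) γ =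
      evalPS k (fun β => coeff β (iterPDeriv L P)) γ := by
    refine finsum_congr fun β => ?_
    by_cases hβ : coeff γ (∏ n ∈ β.support, psumC k n ^ β n) = 0
    · rw [hβ, mul_zero, mul_zero]
    · congr 1
      refine Eq.trans ?_ (coeff_iterPDeriv L P β).symm
      refine derivsCoeff_congr L ?_
      rw [← hs, tauCoeff, hP, coeff_add, coeff_sum]
      congr 1
      refine (finsum_mem_def {μ | PtnGt lam μ}
        fun μ => ξ μ * coeff (β + s) μ.schurP).trans ?_
      rw [finsum_eq_sum_of_support_subset (s := M)]
      · refine Finset.sum_congr rfl fun μ hμ => ?_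
        have hmem : μ ∈ {μ | PtnGt lam μ} := (Finset.mem_filter.1 hμ).2
        rw [Set.indicator_of_mem hmem, coeff_smul, smul_eq_mul]
      · intro μ hμ
        have hmem : μ ∈ {μ | PtnGt lam μ} := Set.mem_of_indicator_ne_zero hμ
        rw [Function.mem_support, Set.indicator_of_mem hmem] at hμ
        refine Finset.mem_coe.2 (Finset.mem_filter.2 ⟨hM.mem_toFinset.2 ?_, hmem⟩)
        exact Set.mem_biUnion hβ (right_ne_zero_of_mul hμ)
  rw [htau, evalPS_coeff, hzero, coeff_zero]
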